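/- Let (W,S) be a Coxeter system, J ⊆ S, and σ, ω ∈ W with ᴶσ = ᴶω (i.e. W_J σ = W_J ω). Then for every z ∈ W with σ ≤ z ≤ ω in the Bruhat order, ᴶz = ᴶσ; moreover the map κ ↦ κ·ᴶσ is an order isomorphism from the Bruhat interval [σ_J, ω_J] in W_J onto the Bruhat interval [σ, ω] in W. -/

import Mathlib

/-- The Bruhat order on a Coxeter group. -/
def CoxeterSystem.bruhatLE {B W : Type*} [Group W] {M : CoxeterMatrix B}
    (cs : CoxeterSystem M W) (u v : W) : Prop :=
  Relation.ReflTransGen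
    (fun x y => (∃ t, cs.IsReflection t ∧ y = t * x) ∧ cs.length x < cs.length y) u v

/-- The Bruhat order of the Coxeter system `(W_J, J)`, expressed inside `W`:
the reflections of `(W_J, J)` are exactly the reflections of `W` lying in `W_J`,
and the length function of `(W_J, J)` is the restriction of that of `W`. -/
def CoxeterSystem.bruhatLEIn {B W : Type*} [Group W] {M : CoxeterMatrix B}
    (cs : CoxeterSystem M W) (K : Subgroup W) (u v : W) : Prop :=
  Relation.ReflTransGen
    (fun x y => (∃ t, cs.IsReflection t ∧ t ∈ K ∧ y = t * x) ∧
      cs.length x < cs.length y) u v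

/-- `m` is the minimal length representative of the coset `W_J z`. -/
def CoxeterSystem.IsMinRep {B W : Type*} [Group W] {M : CoxeterMatrix B}
    (cs : CoxeterSystem M W) (J : Set B) (z m : W) : Prop :=
  (∃ a ∈ Subgroup.closure (cs.simple '' J), m = a * z) ∧
    ∀ w, (∃ a ∈ Subgroup.closure (cs.simple '' J), w = a * z) →
      cs.length m ≤ cs.length w

/-!
The left inversions of a product satisfy `N(u * v) ⊆ N(u) ∪ u N(v) u⁻¹`, because the parity with
which a reflection occurs in the left inversion sequence of a word is a cocycle on `W`.
By induction, the left inversions of an element of `W_J` lie in `W_J`, and hence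
`ℓ (k * m) = ℓ k + ℓ m` for `k ∈ W_J` and `m` of minimal length in `W_J m`.

If `t` is a left inversion of `y = k * n`, with `k ∈ W_J` and `n` minimal in its coset, then either
`t` is an inversion of `k`, so that `t * y` stays in `W_J y`, or `k⁻¹ * t * k` is an inversion of
`n`, so that `W_J (t * y)` contains an element below `n`. Therefore `z ↦ ᴶz` is monotone, a Bruhat
interval whose ends lie in one coset of `W_J` stays in that coset, and by additivity of lengths
the two Bruhat orders have the same steps there.
-/

namespace ParabolicCoset

open CoxeterSystem

variable {B W : Type*} [Group W] {M : CoxeterMatrix B} (cs : CoxeterSystem M W)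

section ReflectionCocycle

/-- The conjugation action of `W` on the group of sign functions `W → {±1}`. -/
def conjSigns (W : Type*) [Group W] : W →* MulAut (W → ℤˣ) :=
  mulAutArrow.comp ConjAct.toConjAct.toMonoidHom

lemma conjSigns_apply (w : W) (f : W → ℤˣ) (t : W) : conjSigns W w f t = f (w⁻¹ * t * w) := by
  change f (w⁻¹ * t * w⁻¹⁻¹) = _
  rw [inv_inv]

lemma prod_map_alternatingWord {G : Type*} [Monoid G] (f : B → G) (i j : B) (n : ℕ) :
    ((alternatingWord i j (2 * n)).map f).prod = (f i * f j) ^ n := by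
  induction n with
  | zero => simp [alternatingWord]
  | succ n ih =>
    simp [mul_add_one, alternatingWord_succ', ih, pow_succ', mul_assoc]

lemma leftInvSeq_alternatingWord_eq_append_self (i j : B) :
    ∃ l, cs.leftInvSeq (alternatingWord i j (2 * M i j)) = l ++ l := by
  set seq := cs.leftInvSeq (alternatingWord i j (2 * M i j)) with hseq
  suffices h : seq.drop (M i j) = seq.take (M i j) by
    exact ⟨seq.take (M i j), by conv_lhs => rw [← List.take_append_drop (M i j) seq, h]⟩
  have hlen : seq.length = 2 * M i j := by simp [hseq]
  refine List.ext_getElem (by rw [List.length_drop, List.length_take, hlen]; omega) fun k hk _ => ?_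
  have hkm : k < M i j := by
    rw [List.length_drop, hlen] at hk
    omega
  -- The entry at position `k` is `s i * (s j * s i) ^ k`, which is `M i j`-periodic in `k`.
  rw [List.getElem_drop, List.getElem_take, getElem_leftInvSeq_alternatingWord _ _ _ _ _ (by omega),
    getElem_leftInvSeq_alternatingWord _ _ _ _ _ (by omega), prod_alternatingWord_eq_mul_pow,
    prod_alternatingWord_eq_mul_pow]
  have hhalf (n : ℕ) : (2 * n + 1) / 2 = n := by omega
  simp [hhalf, pow_add]

variable [DecidableEq W]

/-- The simple reflection `s i`, paired with the sign function that is `-1` exactly at `s i`.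
A product of these in the semidirect product records, for each `t`, the parity of the number of
occurrences of `t` in the left inversion sequence of the word. -/
noncomputable def signedSimple (i : B) : (W → ℤˣ) ⋊[conjSigns W] W :=
  ⟨Pi.mulSingle (cs.simple i) (-1), cs.simple i⟩

lemma prod_map_signedSimple (a : List B) :
    (a.map (signedSimple cs)).prod =
      ⟨fun t => (-1) ^ (cs.leftInvSeq a).count t, cs.wordProd a⟩ := by
  induction a with
  | nil => ext <;> simp
  | cons i a ih =>
    have count_conj (t : W) : ((cs.leftInvSeq a).map (MulAut.conj (cs.simple i))).count t =
        (cs.leftInvSeq a).count (cs.simple i * t * cs.simple i) := by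
      have ht : t = MulAut.conj (cs.simple i) (cs.simple i * t * cs.simple i) := by
        simp [mul_assoc]
      conv_lhs => rw [ht]
      exact List.count_map_of_injective _ _ (MulAut.conj (cs.simple i)).injective _
    rw [List.map_cons, List.prod_cons, ih]
    ext t
    · by_cases ht : t = cs.simple i
      · simp [signedSimple, conjSigns_apply, leftInvSeq, count_conj, ht, pow_succ']
      · simp [signedSimple, conjSigns_apply, leftInvSeq, count_conj, ht, Ne.symm ht]
    · simp [signedSimple, wordProd_cons]

lemma isLiftable_signedSimple : M.IsLiftable (signedSimple cs) := by
  intro i j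
  obtain ⟨l, hl⟩ := leftInvSeq_alternatingWord_eq_append_self cs i j
  rw [← prod_map_alternatingWord, prod_map_signedSimple, hl]
  ext t
  · simp [← two_mul, pow_mul]
  · simp [prod_alternatingWord_eq_mul_pow]

/-- The homomorphism `W → {±1}^W ⋊ W` extending `signedSimple`. -/
noncomputable def signedLift : W →* (W → ℤˣ) ⋊[conjSigns W] W :=
  cs.lift ⟨signedSimple cs, isLiftable_signedSimple cs⟩

lemma signedLift_wordProd (a : List B) :
    signedLift cs (cs.wordProd a) =
      ⟨fun t => (-1) ^ (cs.leftInvSeq a).count t, cs.wordProd a⟩ := by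
  rw [← prod_map_signedSimple, wordProd, map_list_prod, List.map_map]
  congr 2
  ext1 i
  exact cs.lift_apply_simple _ i

lemma signedLift_right (w : W) : (signedLift cs w).right = w := by
  obtain ⟨a, rfl⟩ := cs.wordProd_surjective w
  rw [signedLift_wordProd]

/-- The reflection cocycle: its value at `w` and `t` is `-1` exactly if `t` is a left inversion
of `w`. -/
noncomputable def inversionSign (w : W) : W → ℤˣ := (signedLift cs w).left

lemma inversionSign_wordProd (a : List B) (t : W) :
    inversionSign cs (cs.wordProd a) t = (-1) ^ (cs.leftInvSeq a).count t := by
  rw [inversionSign, signedLift_wordProd]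

lemma inversionSign_mul (u v t : W) :
    inversionSign cs (u * v) t = inversionSign cs u t * inversionSign cs v (u⁻¹ * t * u) := by
  simp only [inversionSign, map_mul, SemidirectProduct.mul_left, signedLift_right, Pi.mul_apply,
    conjSigns_apply]

lemma inversionSign_one (t : W) : inversionSign cs 1 t = 1 := by
  simpa using inversionSign_wordProd cs [] t

lemma inversionSign_simple_self (i : B) : inversionSign cs (cs.simple i) (cs.simple i) = -1 := by
  simpa [leftInvSeq] using inversionSign_wordProd cs [i] (cs.simple i)

variable {cs}

lemma inversionSign_self {t : W} (ht : cs.IsReflection t) : inversionSign cs t t = -1 := by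
  obtain ⟨u, i, rfl⟩ := ht
  have h_inv : inversionSign cs u (u * cs.simple i * u⁻¹) *
      inversionSign cs u⁻¹ (cs.simple i) = 1 := by
    simpa [inversionSign_one, mul_assoc] using
      (inversionSign_mul cs u u⁻¹ (u * cs.simple i * u⁻¹)).symm
  have h_conj : u⁻¹ * (u * cs.simple i * u⁻¹) * u = cs.simple i := by group
  have h_conj' : (u * cs.simple i)⁻¹ * (u * cs.simple i * u⁻¹) * (u * cs.simple i) =
      cs.simple i := by simp [mul_assoc]
  rw [inversionSign_mul, inversionSign_mul, h_conj, h_conj', inversionSign_simple_self,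
    mul_right_comm, h_inv, one_mul]

lemma isLeftInversion_of_inversionSign_eq_neg_one {w t : W} (h : inversionSign cs w t = -1) :
    cs.IsLeftInversion w t := by
  obtain ⟨a, ha, rfl⟩ := cs.exists_isReduced w
  refine cs.isLeftInversion_of_mem_leftInvSeq ha ?_
  by_contra hmem
  rw [inversionSign_wordProd, List.count_eq_zero_of_not_mem hmem] at h
  simp at h

lemma isLeftInversion_iff_inversionSign_eq_neg_one {w t : W} :
    cs.IsLeftInversion w t ↔ inversionSign cs w t = -1 := by
  refine ⟨fun h => ?_, isLeftInversion_of_inversionSign_eq_neg_one⟩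
  by_contra hne
  have hsign : inversionSign cs (t * w) t = -1 := by
    rw [inversionSign_mul, inversionSign_self h.1]
    simp [(Int.units_eq_one_or _).resolve_right hne]
  exact h.1.isLeftInversion_mul_right_iff.1 (isLeftInversion_of_inversionSign_eq_neg_one hsign) h

end ReflectionCocycle

section ParabolicSubgroup

variable {cs} in
lemma isLeftInversion_or_of_mul {u v t : W} (h : cs.IsLeftInversion (u * v) t) :
    cs.IsLeftInversion u t ∨ cs.IsLeftInversion v (u⁻¹ * t * u) := by
  classical
  simp only [isLeftInversion_iff_inversionSign_eq_neg_one, inversionSign_mul] at h ⊢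
  refine or_iff_not_imp_left.2 fun hu => ?_
  rwa [(Int.units_eq_one_or _).resolve_right hu, one_mul] at h

/-- The standard parabolic subgroup `W_J`. -/
abbrev parabolic (J : Set B) : Subgroup W := Subgroup.closure (cs.simple '' J)

variable {cs} {J : Set B}

lemma mem_parabolic_of_isLeftInversion {x t : W} (hx : x ∈ parabolic cs J)
    (ht : cs.IsLeftInversion x t) : t ∈ parabolic cs J := by
  induction hx using Subgroup.closure_induction generalizing t with
  | mem x hx =>
    obtain ⟨i, hi, rfl⟩ := hx
    have hlen := ht.2
    rw [length_simple, Nat.lt_one_iff, length_eq_zero_iff, mul_eq_one_iff_eq_inv] at hlen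
    rw [hlen]
    exact inv_mem (Subgroup.subset_closure ⟨i, hi, rfl⟩)
  | one => simpa using ht.2
  | mul x y hx _ ihx ihy =>
    rcases isLeftInversion_or_of_mul ht with htx | hty
    · exact ihx htx
    · simpa [mul_assoc] using mul_mem (mul_mem hx (ihy hty)) (inv_mem hx)
  | inv x hx ihx =>
    have hconj : cs.IsLeftInversion x (x * t * x⁻¹) :=
      ⟨ht.1.conj x, by simpa [mul_assoc, ← cs.length_inv (x * t), ht.1.inv] using ht.2⟩
    simpa [mul_assoc] using mul_mem (mul_mem (inv_mem hx) (ihx hconj)) hx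

@[elab_as_elim]
lemma parabolic_induction {P : (x : W) → x ∈ parabolic cs J → Prop} (one : P 1 (one_mem _))
    (simple_mul : ∀ (i : B) (x : W) (hi : cs.simple i ∈ parabolic cs J)
      (hx : x ∈ parabolic cs J), ¬cs.IsLeftDescent x i → P x hx →
      P (cs.simple i * x) (mul_mem hi hx))
    {x : W} (hx : x ∈ parabolic cs J) : P x hx := by
  induction h : cs.length x using Nat.strong_induction_on generalizing x with
  | _ n ih =>
    rcases eq_or_ne x 1 with rfl | hne
    · exact one
    obtain ⟨i, hi⟩ := cs.exists_leftDescent_of_ne_one hne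
    have hmem : cs.simple i ∈ parabolic cs J := mem_parabolic_of_isLeftInversion hx
      ((cs.isLeftInversion_simple_iff_isLeftDescent x i).2 hi)
    have hmem' := mul_mem hmem hx
    have hP := simple_mul i _ hmem hmem' (cs.isLeftDescent_iff_not_isLeftDescent_mul.1 hi)
      (ih _ (h ▸ hi) hmem' rfl)
    simpa only [simple_mul_simple_cancel_left] using hP

end ParabolicSubgroup

section MinimalRepresentatives

variable {cs} {J : Set B} {m n z : W}

lemma exists_isMinRep (cs : CoxeterSystem M W) (J : Set B) (z : W) : ∃ m, cs.IsMinRep J z m := by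
  obtain ⟨m, hm, hmin⟩ := exists_minimalFor_of_wellFoundedLT
    (fun w => ∃ a ∈ parabolic cs J, w = a * z) cs.length ⟨z, 1, one_mem _, (one_mul z).symm⟩
  exact ⟨m, hm, fun w hw => (le_total _ _).elim id (hmin hw)⟩

lemma isMinRep_mul_left (hm : cs.IsMinRep J z m) {a : W} (ha : a ∈ parabolic cs J) :
    cs.IsMinRep J (a * z) m := by
  obtain ⟨⟨b, hb, rfl⟩, hmin⟩ := hm
  refine ⟨⟨b * a⁻¹, mul_mem hb (inv_mem ha), by simp [mul_assoc]⟩, ?_⟩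
  rintro _ ⟨c, hc, rfl⟩
  exact hmin _ ⟨c * a, mul_mem hc ha, (mul_assoc c a z).symm⟩

lemma exists_mem_parabolic_eq_mul (hm : cs.IsMinRep J z m) :
    ∃ a ∈ parabolic cs J, z = a * m := by
  obtain ⟨⟨a, ha, rfl⟩, -⟩ := hm
  exact ⟨a⁻¹, inv_mem ha, (inv_mul_cancel_left a z).symm⟩

lemma isMinRep_mul_minRep (hm : cs.IsMinRep J z m) {a : W} (ha : a ∈ parabolic cs J) :
    cs.IsMinRep J (a * m) m := by
  obtain ⟨b, hb, rfl⟩ := exists_mem_parabolic_eq_mul hm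
  simpa [mul_assoc] using isMinRep_mul_left hm (mul_mem ha (inv_mem hb))

lemma not_isLeftInversion_of_mem_parabolic (hm : cs.IsMinRep J z m) {t : W}
    (ht : t ∈ parabolic cs J) : ¬cs.IsLeftInversion m t := by
  obtain ⟨⟨a, ha, rfl⟩, hmin⟩ := hm
  exact fun h => (hmin _ ⟨t * a, mul_mem ht ha, (mul_assoc t a z).symm⟩).not_gt h.2

lemma length_mul_of_isMinRep (hm : cs.IsMinRep J z m) {x : W} (hx : x ∈ parabolic cs J) :
    cs.length (x * m) = cs.length x + cs.length m := by
  induction hx using parabolic_induction with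
  | one => simp
  | simple_mul i x hi hx hxi ih =>
    have hxmi : ¬cs.IsLeftDescent (x * m) i := by
      rw [← isLeftInversion_simple_iff_isLeftDescent] at hxi ⊢
      intro h
      refine (isLeftInversion_or_of_mul h).elim hxi ?_
      exact not_isLeftInversion_of_mem_parabolic hm (mul_mem (mul_mem (inv_mem hx) hi) hx)
    rw [not_isLeftDescent_iff] at hxi hxmi
    rw [mul_assoc, hxmi, ih, hxi, add_right_comm]

lemma isMinRep_unique (hm : cs.IsMinRep J z m) (hn : cs.IsMinRep J z n) : m = n := by
  obtain ⟨a, ha, rfl⟩ := exists_mem_parabolic_eq_mul hm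
  obtain ⟨⟨b, hb, rfl⟩, hmin⟩ := hn
  have hlen := hmin m ⟨a⁻¹, inv_mem ha, (inv_mul_cancel_left a m).symm⟩
  rw [← mul_assoc, length_mul_of_isMinRep hm (mul_mem hb ha), add_le_iff_nonpos_left,
    nonpos_iff_eq_zero, length_eq_zero_iff] at hlen
  rw [← mul_assoc, hlen, one_mul]

end MinimalRepresentatives

section BruhatOrder

variable {cs} {J : Set B} {m n x y z : W}

lemma bruhatLE_of_isLeftInversion {t : W} (h : cs.IsLeftInversion x t) :
    cs.bruhatLE (t * x) x :=
  .single ⟨⟨t, h.1, by rw [← mul_assoc, h.1.mul_self, one_mul]⟩, h.2⟩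

lemma isLeftInversion_mul_of_length_lt {t : W} (ht : cs.IsReflection t)
    (h : cs.length x < cs.length (t * x)) : cs.IsLeftInversion (t * x) t :=
  ht.isLeftInversion_mul_right_iff.2 fun h' => h.not_gt h'.2

lemma length_le_of_bruhatLE (h : cs.bruhatLE x y) : cs.length x ≤ cs.length y := by
  induction h with
  | refl => exact le_rfl
  | tail _ hstep ih => exact ih.trans hstep.2.le

lemma bruhatLE_antisymm (hxy : cs.bruhatLE x y) (hyx : cs.bruhatLE y x) : x = y := by
  rcases hxy.cases_head with rfl | ⟨c, ⟨-, hlt⟩, hcy⟩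
  · rfl
  · exact absurd hlt ((length_le_of_bruhatLE hcy).trans (length_le_of_bruhatLE hyx)).not_gt

lemma bruhatLE_mul_of_bruhatLEIn (hm : cs.IsMinRep J z m) {k k' : W} (hk : k ∈ parabolic cs J)
    (h : cs.bruhatLEIn (parabolic cs J) k k') : cs.bruhatLE (k * m) (k' * m) := by
  induction h using Relation.ReflTransGen.head_induction_on with
  | refl => exact .refl
  | head hstep _ ih =>
    obtain ⟨⟨t, ht, htJ, rfl⟩, hlt⟩ := hstep
    have htk := mul_mem htJ hk
    refine .head ⟨⟨t, ht, mul_assoc t _ m⟩, ?_⟩ (ih htk)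
    rw [length_mul_of_isMinRep hm hk, length_mul_of_isMinRep hm htk]
    exact Nat.add_lt_add_right hlt _

lemma bruhatLEIn_one_left (hx : x ∈ parabolic cs J) : cs.bruhatLEIn (parabolic cs J) 1 x := by
  induction hx using parabolic_induction with
  | one => exact .refl
  | simple_mul i x hi _ hxi ih =>
    refine ih.tail ⟨⟨_, cs.isReflection_simple i, hi, rfl⟩, ?_⟩
    rw [cs.not_isLeftDescent_iff.1 hxi]
    exact Nat.lt_succ_self _

lemma minRep_bruhatLE (hm : cs.IsMinRep J z m) : cs.bruhatLE m z := by
  obtain ⟨a, ha, rfl⟩ := exists_mem_parabolic_eq_mul hm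
  simpa using bruhatLE_mul_of_bruhatLEIn hm (one_mem _) (bruhatLEIn_one_left ha)

lemma bruhatLE_minReps_of_isLeftInversion {t : W} (ht : cs.IsLeftInversion y t)
    (hm : cs.IsMinRep J (t * y) m) (hn : cs.IsMinRep J y n) : cs.bruhatLE m n := by
  obtain ⟨k, hk, rfl⟩ := exists_mem_parabolic_eq_mul hn
  rcases isLeftInversion_or_of_mul ht with htk | htn
  · have htJ := mem_parabolic_of_isLeftInversion hk htk
    rw [isMinRep_unique hm (isMinRep_mul_left hn htJ)]
    exact .refl
  · have hm' : cs.IsMinRep J (k⁻¹ * t * k * n) m := by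
      simpa only [mul_assoc] using isMinRep_mul_left hm (inv_mem hk)
    exact (minRep_bruhatLE hm').trans (bruhatLE_of_isLeftInversion htn)

theorem bruhatLE_minReps_of_bruhatLE (h : cs.bruhatLE x y) (hm : cs.IsMinRep J x m)
    (hn : cs.IsMinRep J y n) : cs.bruhatLE m n := by
  induction h generalizing n with
  | refl => rw [isMinRep_unique hm hn]; exact .refl
  | @tail w y _ hstep ih =>
    obtain ⟨⟨t, ht, rfl⟩, hlt⟩ := hstep
    obtain ⟨p, hp⟩ := exists_isMinRep cs J w
    refine (ih hp).trans
      (bruhatLE_minReps_of_isLeftInversion (isLeftInversion_mul_of_length_lt ht hlt) ?_ hn)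
    simpa [← mul_assoc, ht.mul_self] using hp

theorem isMinRep_of_between (hx : cs.IsMinRep J x m) (hy : cs.IsMinRep J y m)
    (hxz : cs.bruhatLE x z) (hzy : cs.bruhatLE z y) : cs.IsMinRep J z m := by
  obtain ⟨n, hn⟩ := exists_isMinRep cs J z
  rwa [bruhatLE_antisymm (bruhatLE_minReps_of_bruhatLE hxz hx hn)
    (bruhatLE_minReps_of_bruhatLE hzy hn hy)]

lemma bruhatLEIn_of_bruhatLE_mul (hm : cs.IsMinRep J z m) {k k' : W} (hk : k ∈ parabolic cs J)
    (hk' : k' ∈ parabolic cs J) (h : cs.bruhatLE (k * m) (k' * m)) :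
    cs.bruhatLEIn (parabolic cs J) k k' := by
  generalize hx : k * m = x at h
  induction h using Relation.ReflTransGen.head_induction_on generalizing k with
  | refl => rw [mul_right_cancel hx]; exact .refl
  | head hstep hrest ih =>
    subst hx
    obtain ⟨c, hc, rfl⟩ := exists_mem_parabolic_eq_mul <| isMinRep_of_between
      (isMinRep_mul_minRep hm hk) (isMinRep_mul_minRep hm hk') (.single hstep) hrest
    refine .head ?_ (ih hc rfl)
    obtain ⟨⟨t, ht, hct⟩, hlt⟩ := hstep
    rw [← mul_assoc, mul_left_inj] at hct
    rw [length_mul_of_isMinRep hm hk, length_mul_of_isMinRep hm hc] at hlt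
    exact ⟨⟨t, ht, eq_mul_inv_of_mul_eq hct.symm ▸ mul_mem hc (inv_mem hk), hct⟩, by omega⟩

theorem bruhatLE_mul_right_iff (hm : cs.IsMinRep J z m) {k k' : W} (hk : k ∈ parabolic cs J)
    (hk' : k' ∈ parabolic cs J) :
    cs.bruhatLE (k * m) (k' * m) ↔ cs.bruhatLEIn (parabolic cs J) k k' :=
  ⟨bruhatLEIn_of_bruhatLE_mul hm hk hk', bruhatLE_mul_of_bruhatLEIn hm hk⟩

end BruhatOrder

end ParabolicCoset

/-- if `ᴶσ = ᴶω =: m`, then every `z` in the Bruhat interval `[σ,ω]`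
satisfies `ᴶz = m`, and `κ ↦ κ * m` is an order isomorphism from the Bruhat
interval `[σ_J, ω_J]` of `(W_J, J)` onto the Bruhat interval `[σ, ω]` of `W`. -/
theorem stmt_5 {B W : Type*} [Group W] {M : CoxeterMatrix B}
    (cs : CoxeterSystem M W) (J : Set B) (σ ω m σJ ωJ : W)
    (hσm : cs.IsMinRep J σ m) (hωm : cs.IsMinRep J ω m)
    (hσJ : σJ ∈ Subgroup.closure (cs.simple '' J)) (hσ : σ = σJ * m)
    (hωJ : ωJ ∈ Subgroup.closure (cs.simple '' J)) (hω : ω = ωJ * m) :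
    (∀ z : W, cs.bruhatLE σ z → cs.bruhatLE z ω → cs.IsMinRep J z m) ∧
    (∀ κ ∈ Subgroup.closure (cs.simple '' J),
      cs.bruhatLEIn (Subgroup.closure (cs.simple '' J)) σJ κ →
      cs.bruhatLEIn (Subgroup.closure (cs.simple '' J)) κ ωJ →
      cs.bruhatLE σ (κ * m) ∧ cs.bruhatLE (κ * m) ω) ∧
    (∀ κ κ', κ ∈ Subgroup.closure (cs.simple '' J) →
      κ' ∈ Subgroup.closure (cs.simple '' J) →
      cs.bruhatLEIn (Subgroup.closure (cs.simple '' J)) σJ κ →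
      cs.bruhatLEIn (Subgroup.closure (cs.simple '' J)) κ ωJ →
      cs.bruhatLEIn (Subgroup.closure (cs.simple '' J)) σJ κ' →
      cs.bruhatLEIn (Subgroup.closure (cs.simple '' J)) κ' ωJ →
      (cs.bruhatLEIn (Subgroup.closure (cs.simple '' J)) κ κ' ↔
        cs.bruhatLE (κ * m) (κ' * m))) ∧
    (∀ z : W, cs.bruhatLE σ z → cs.bruhatLE z ω →
      ∃ κ ∈ Subgroup.closure (cs.simple '' J),
        cs.bruhatLEIn (Subgroup.closure (cs.simple '' J)) σJ κ ∧
        cs.bruhatLEIn (Subgroup.closure (cs.simple '' J)) κ ωJ ∧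
        z = κ * m) := by
  open ParabolicCoset in
  subst hσ hω
  have between : ∀ z, cs.bruhatLE (σJ * m) z → cs.bruhatLE z (ωJ * m) → cs.IsMinRep J z m :=
    fun z => isMinRep_of_between hσm hωm
  refine ⟨between, fun κ hκ hσκ hκω => ?_, fun κ κ' hκ hκ' _ _ _ _ => ?_, fun z hσz hzω => ?_⟩
  · exact ⟨(bruhatLE_mul_right_iff hσm hσJ hκ).2 hσκ, (bruhatLE_mul_right_iff hσm hκ hωJ).2 hκω⟩
  · exact (bruhatLE_mul_right_iff hσm hκ hκ').symm
  · obtain ⟨κ, hκ, rfl⟩ := exists_mem_parabolic_eq_mul (between z hσz hzω)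
    exact ⟨κ, hκ, (bruhatLE_mul_right_iff hσm hσJ hκ).1 hσz,
      (bruhatLE_mul_right_iff hσm hκ hωJ).1 hzω, rfl⟩
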